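/- Let δ > 0, let Q : ℝ → Matrix (Fin N) (Fin N) ℝ be continuous with Q t a generator matrix for every t ≥ 0, and suppose there are constants C ≥ 1 and γ > 0 such that every solution ξ : ℝ → (Fin N → ℝ) of the homogeneous equation HasDerivAt ξ (δ⁻¹ • ((Q t)ᵀ *ᵥ ξ t)) t with zero-sum value at some time s ≥ 0 satisfies ‖ξ t‖₁ ≤ C * exp(−γ (t − s)/δ) * ‖ξ s‖₁ for all t ≥ s. Let g : ℝ → (Fin N → ℝ) be continuous with ‖g t‖₁ ≤ M for all t ≥ 0, and let η : ℝ → (Fin N → ℝ) satisfy ∑ i, η i t = 0 for all t and HasDerivAt η (δ⁻¹ • ((Q t)ᵀ *ᵥ η t) − g t) t for all t ≥ 0. Then for every t ≥ 0, ‖η t‖₁ ≤ C * exp(−γ t/δ) * ‖η 0‖₁ + C * M * δ / γ. -/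

import Mathlib

open Matrix

/-- The ℓ¹ norm on `Fin N → ℝ`. -/
def l1norm {N : ℕ} (x : Fin N → ℝ) : ℝ := ∑ i, |x i|

/-- A generator (transition-rate) matrix: nonnegative off-diagonal entries and zero row sums. -/
def IsGenerator {N : ℕ} (Q : Matrix (Fin N) (Fin N) ℝ) : Prop :=
  (∀ i j, i ≠ j → 0 ≤ Q i j) ∧ (∀ i, ∑ j, Q i j = 0)

/-- The iterates of the Peano–Baker series of `ξ' = A ξ`, `ξ 0 = x₀`. -/
noncomputable def peanoBaker {E : Type*} [NormedAddCommGroup E] [NormedSpace ℝ E]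
    (A : ℝ → E →L[ℝ] E) (x₀ : E) : ℕ → ℝ → E
  | 0 => fun _ => x₀
  | n + 1 => fun t => ∫ s in (0 : ℝ)..t, A s (peanoBaker A x₀ n s)

section LinearODE

variable {E : Type*} [NormedAddCommGroup E] [NormedSpace ℝ E]
  {A : ℝ → E →L[ℝ] E}

theorem continuous_peanoBaker (hA : Continuous A) (x₀ : E) (n : ℕ) :
    Continuous (peanoBaker A x₀ n) := by
  induction n with
  | zero => exact continuous_const
  | succ n ih =>
    exact intervalIntegral.continuous_primitive
      (fun a b => (hA.clm_apply ih).intervalIntegrable a b) 0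

theorem hasDerivAt_peanoBaker_succ [CompleteSpace E] (hA : Continuous A) (x₀ : E) (n : ℕ) (t : ℝ) :
    HasDerivAt (peanoBaker A x₀ (n + 1)) (A t (peanoBaker A x₀ n t)) t :=
  (hA.clm_apply (continuous_peanoBaker hA x₀ n)).integral_hasStrictDerivAt 0 t |>.hasDerivAt

theorem norm_peanoBaker_le (hA : Continuous A) (x₀ : E) {K R : ℝ} (hK : 0 ≤ K)
    (hAK : ∀ s, |s| ≤ R → ‖A s‖ ≤ K) (n : ℕ) (t : ℝ) (ht : |t| ≤ R) :
    ‖peanoBaker A x₀ n t‖ ≤ ‖x₀‖ * (K ^ n * |t| ^ n / n.factorial) := by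
  induction n generalizing t with
  | zero => simp [peanoBaker]
  | succ n ih =>
    have hcont := (hA.clm_apply (continuous_peanoBaker hA x₀ n))
    calc ‖peanoBaker A x₀ (n + 1) t‖
        ≤ ∫ s in Set.uIoc 0 t, ‖A s (peanoBaker A x₀ n s)‖ :=
          intervalIntegral.norm_integral_le_integral_norm_uIoc
      _ ≤ ∫ s in Set.uIoc 0 t, ‖x₀‖ * K ^ (n + 1) / n.factorial * |s - 0| ^ n := by
          refine MeasureTheory.setIntegral_mono_on
            (hcont.norm.intervalIntegrable 0 t).def'
            ((by fun_prop : Continuous fun s : ℝ =>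
              ‖x₀‖ * K ^ (n + 1) / n.factorial * |s - 0| ^ n).intervalIntegrable 0 t).def'
            measurableSet_uIoc fun s hs => ?_
          have hst : |s| ≤ |t| := by
            simpa using Set.abs_sub_left_of_mem_uIcc (Set.uIoc_subset_uIcc hs)
          calc ‖A s (peanoBaker A x₀ n s)‖ ≤ ‖A s‖ * ‖peanoBaker A x₀ n s‖ := (A s).le_opNorm _
            _ ≤ K * (‖x₀‖ * (K ^ n * |s| ^ n / n.factorial)) :=
              mul_le_mul (hAK s (hst.trans ht)) (ih s (hst.trans ht)) (norm_nonneg _) hK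
            _ = _ := by rw [sub_zero]; ring
      _ = ‖x₀‖ * (K ^ (n + 1) * |t| ^ (n + 1) / (n + 1).factorial) := by
          rw [MeasureTheory.integral_const_mul, integral_pow_abs_sub_uIoc, sub_zero,
            Nat.factorial_succ]
          push_cast
          field_simp

/-- Linear ODEs with continuous coefficients have global solutions. -/
theorem exists_hasDerivAt_linear [CompleteSpace E] (hA : Continuous A) (x₀ : E) :
    ∃ ξ : ℝ → E, ξ 0 = x₀ ∧ ∀ t, HasDerivAt ξ (A t (ξ t)) t := by
  refine ⟨fun t => ∑' n, peanoBaker A x₀ n t, ?_, fun t => ?_⟩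
  · dsimp only
    rw [tsum_eq_single 0]
    · rfl
    · rintro (_ | n) hn
      · exact absurd rfl hn
      · exact intervalIntegral.integral_same
  set R := |t| + 1
  obtain ⟨K₀, hK₀⟩ := (isCompact_Icc (a := -R) (b := R)).exists_bound_of_continuousOn
    hA.continuousOn
  set K := max K₀ 0
  have hK : 0 ≤ K := le_max_right _ _
  have hAK : ∀ s, |s| ≤ R → ‖A s‖ ≤ K := fun s hs => (hK₀ s (abs_le.1 hs)).trans (le_max_left _ _)
  set u : ℕ → ℝ := fun n => ‖x₀‖ * ((K * R) ^ n / n.factorial) with hu_def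
  have hu : Summable u := (Real.summable_pow_div_factorial _).mul_left _
  have hle : ∀ n s, |s| ≤ R → ‖peanoBaker A x₀ n s‖ ≤ u n := fun n s hs => by
    refine (norm_peanoBaker_le hA x₀ hK hAK n s hs).trans ?_
    simp only [hu_def, mul_pow]
    gcongr
  have hsum : ∀ s, |s| ≤ R → Summable fun n => peanoBaker A x₀ n s := fun s hs =>
    .of_norm_bounded hu fun n => hle n s hs
  have htR : |t| ≤ R := by simp [R]
  have hderiv : HasDerivAt (fun s => ∑' n, peanoBaker A x₀ (n + 1) s)
      (∑' n, A t (peanoBaker A x₀ n t)) t := by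
    refine hasDerivAt_tsum_of_isPreconnected (t := Set.Ioo (-R) R) (y₀ := t)
      (u := fun n => K * u n) (hu.mul_left K)
      isOpen_Ioo isPreconnected_Ioo (fun n s _ => hasDerivAt_peanoBaker_succ hA x₀ n s)
      (fun n s hs => ?_) (abs_lt.1 (by simp [R])) ((summable_nat_add_iff 1).2 (hsum t htR))
      (abs_lt.1 (by simp [R]))
    have hs' : |s| ≤ R := (abs_lt.2 hs).le
    exact ((A s).le_opNorm _).trans
      (mul_le_mul (hAK s hs') (hle n s hs') (norm_nonneg _) hK)
  rw [← (A t).map_tsum (hsum t htR)] at hderiv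
  refine (hderiv.const_add x₀).congr_of_eventuallyEq ?_
  filter_upwards [Ioo_mem_nhds (abs_lt.1 (by simp [R] : |t| < R)).1
    (abs_lt.1 (by simp [R] : |t| < R)).2] with s hs
  exact (hsum s (abs_lt.2 hs).le).tsum_eq_zero_add

/-- A fundamental solution `Φ` of `ξ' = A ξ` together with its inverse `Ψ`. -/
theorem exists_fundamental_solution [CompleteSpace E] [FiniteDimensional ℝ E] (hA : Continuous A) :
    ∃ Φ Ψ : ℝ → E →L[ℝ] E, (∀ t, HasDerivAt Φ (A t * Φ t) t) ∧
      (∀ t, HasDerivAt Ψ (-(Ψ t * A t)) t) ∧ ∀ t, Φ t * Ψ t = 1 := by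
  obtain ⟨Φ, hΦ0, hΦ⟩ := exists_hasDerivAt_linear
    (A := fun t => ContinuousLinearMap.mul ℝ (E →L[ℝ] E) (A t)) (by fun_prop) 1
  obtain ⟨Ψ, hΨ0, hΨ⟩ := exists_hasDerivAt_linear
    (A := fun t => -(ContinuousLinearMap.mul ℝ (E →L[ℝ] E)).flip (A t)) (by fun_prop) 1
  have hΦ' : ∀ t, HasDerivAt Φ (A t * Φ t) t := hΦ
  have hΨ' : ∀ t, HasDerivAt Ψ (-(Ψ t * A t)) t := hΨ
  refine ⟨Φ, Ψ, hΦ', hΨ', fun t => ?_⟩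
  have hprod : ∀ s, HasDerivAt (fun s => Ψ s * Φ s) 0 s := fun s => by
    refine ((hΨ' s).mul (hΦ' s)).congr_deriv ?_
    rw [neg_mul, mul_assoc, neg_add_cancel]
  have hone : Ψ t * Φ t = 1 := by
    have := is_const_of_deriv_eq_zero (fun s => (hprod s).differentiableAt)
      (fun s => (hprod s).deriv) t 0
    simpa [hΦ0, hΨ0] using this
  have hlin : (Ψ t : E →ₗ[ℝ] E) * (Φ t : E →ₗ[ℝ] E) = 1 := by
    ext x
    exact congrArg (fun L : E →L[ℝ] E => L x) hone
  ext x
  exact congrArg (fun L : E →ₗ[ℝ] E => L x) (mul_eq_one_comm.1 hlin)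

end LinearODE

theorem IsGenerator.sum_transpose_mulVec {N : ℕ} {Q : Matrix (Fin N) (Fin N) ℝ}
    (hQ : IsGenerator Q) (x : Fin N → ℝ) : ∑ i, (Qᵀ *ᵥ x) i = 0 := by
  simp only [Matrix.mulVec, dotProduct, Matrix.transpose_apply]
  rw [Finset.sum_comm]
  simp [← Finset.sum_mul, hQ.2]

theorem norm_toLp_one_eq_l1norm {N : ℕ} (x : Fin N → ℝ) :
    ‖(PiLp.continuousLinearEquiv 1 ℝ fun _ : Fin N => ℝ).symm x‖ = l1norm x := by
  rw [PiLp.norm_eq_of_L1]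
  rfl

theorem initial_layer_bound {N : ℕ} (hN : 1 ≤ N) (δ : ℝ) (hδ : 0 < δ)
    (Q : ℝ → Matrix (Fin N) (Fin N) ℝ) (hQcont : Continuous Q)
    (hQgen : ∀ t : ℝ, 0 ≤ t → IsGenerator (Q t))
    (C γ : ℝ) (hC : 1 ≤ C) (hγ : 0 < γ)
    (hstab : ∀ ξ : ℝ → (Fin N → ℝ),
      (∀ t : ℝ, 0 ≤ t → HasDerivAt ξ (δ⁻¹ • ((Q t)ᵀ *ᵥ ξ t)) t) →
      ∀ s : ℝ, 0 ≤ s → (∑ i, ξ s i) = 0 →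
        ∀ t : ℝ, s ≤ t →
          l1norm (ξ t) ≤ C * Real.exp (-γ * (t - s) / δ) * l1norm (ξ s))
    (M : ℝ) (hM : 0 ≤ M)
    (g : ℝ → (Fin N → ℝ)) (hgcont : Continuous g)
    (hgbound : ∀ t : ℝ, 0 ≤ t → l1norm (g t) ≤ M)
    (η : ℝ → (Fin N → ℝ)) (hηsum : ∀ t : ℝ, (∑ i, η t i) = 0)
    (hη : ∀ t : ℝ, 0 ≤ t → HasDerivAt η (δ⁻¹ • ((Q t)ᵀ *ᵥ η t) - g t) t) :
    ∀ t : ℝ, 0 ≤ t →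
      l1norm (η t) ≤ C * Real.exp (-γ * t / δ) * l1norm (η 0) + C * M * δ / γ := by
  intro t ht
  obtain ⟨Φ, Ψ, hΦ, hΨ, hΦΨ⟩ := exists_fundamental_solution
    (A := fun s => LinearMap.toContinuousLinearMap (Matrix.toLin' (δ⁻¹ • (Q s)ᵀ)))
    (((LinearMap.toContinuousLinearMap : _ ≃ₗ[ℝ] _).toLinearMap ∘ₗ
      (Matrix.toLin' : Matrix (Fin N) (Fin N) ℝ ≃ₗ[ℝ] _).toLinearMap).continuous_of_finiteDimensional.comp
        (hQcont.matrix_transpose.const_smul δ⁻¹))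
  have hA : ∀ s x, LinearMap.toContinuousLinearMap (Matrix.toLin' (δ⁻¹ • (Q s)ᵀ)) x =
      δ⁻¹ • ((Q s)ᵀ *ᵥ x) := fun s x => by
    simp
  have hcancel : ∀ s x, Φ s (Ψ s x) = x := fun s x =>
    congrArg (fun L : (Fin N → ℝ) →L[ℝ] (Fin N → ℝ) => L x) (hΦΨ s)
  have hdecay : ∀ s, 0 ≤ s → s ≤ t → ∀ x : Fin N → ℝ, ∑ i, x i = 0 →
      l1norm (Φ t (Ψ s x)) ≤ C * Real.exp (-γ * (t - s) / δ) * l1norm x := by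
    intro s hs hst x hx
    have := hstab (fun r => Φ r (Ψ s x)) (fun r _ => ?_) s hs ?_ t hst
    · simpa only [hcancel] using this
    · rw [← hA]
      simpa using (hΦ r).clm_apply (hasDerivAt_const r (Ψ s x))
    · simpa only [hcancel] using hx
  have hgsum : ∀ s, 0 ≤ s → ∑ i, g s i = 0 := by
    intro s hs
    have hd : HasDerivAt (fun r => ∑ i, η r i)
        (∑ i, (δ⁻¹ • ((Q s)ᵀ *ᵥ η s) - g s) i) s :=
      HasDerivAt.fun_sum fun i _ => hasDerivAt_pi.1 (hη s hs) i
    simp only [hηsum] at hd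
    have h0 := hd.unique (hasDerivAt_const s (0 : ℝ))
    simp only [Pi.sub_apply, Pi.smul_apply, Finset.sum_sub_distrib, ← Finset.smul_sum,
      (hQgen s hs).sum_transpose_mulVec, smul_zero, zero_sub, neg_eq_zero] at h0
    exact h0
  let ι := (PiLp.continuousLinearEquiv 1 ℝ fun _ : Fin N => ℝ).symm
  have hF : ∀ s, 0 ≤ s → HasDerivAt (fun s => ι (Φ t (Ψ s (η s)))) (-ι (Φ t (Ψ s (g s)))) s := by
    intro s hs
    have h := ι.toContinuousLinearMap.hasFDerivAt.comp_hasDerivAt s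
      ((Φ t).hasFDerivAt.comp_hasDerivAt s ((hΨ s).clm_apply (hη s hs)))
    refine h.congr_deriv ?_
    rw [← hA]
    simp only [ContinuousLinearEquiv.coe_coe, _root_.neg_apply,
      mul_apply_eq_comp, map_sub, map_add, map_neg]
    abel
  have hB : ∀ s, HasDerivAt (fun s => C * Real.exp (-γ * t / δ) * l1norm (η 0) +
      C * M * δ / γ * (Real.exp (-γ * (t - s) / δ) - Real.exp (-γ * t / δ)))
      (C * Real.exp (-γ * (t - s) / δ) * M) s := by
    intro s
    have h : HasDerivAt (fun s => -γ * (t - s) / δ) (γ / δ) s := by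
      convert! (((hasDerivAt_id s).const_sub t).const_mul (-γ)).div_const δ using 1
      ring
    refine (((h.exp.sub_const _).const_mul _).const_add _).congr_deriv ?_
    field_simp
  have key := image_norm_le_of_norm_deriv_right_le_deriv_boundary (a := 0) (b := t)
    (fun s hs => (hF s hs.1).continuousAt.continuousWithinAt)
    (fun s hs => (hF s hs.1).hasDerivWithinAt) ?_ hB ?_ (Set.right_mem_Icc.2 ht)
  · rw [hcancel, norm_toLp_one_eq_l1norm] at key
    refine key.trans ?_
    have hexp := Real.exp_pos (-γ * t / δ)
    have hcoef : 0 ≤ C * M * δ / γ := by positivity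
    simp only [sub_self, mul_zero, zero_div, Real.exp_zero]
    nlinarith
  · rw [norm_toLp_one_eq_l1norm]
    simpa using hdecay 0 le_rfl ht (η 0) (hηsum 0)
  · intro s hs
    rw [norm_neg, norm_toLp_one_eq_l1norm]
    refine (hdecay s hs.1 hs.2.le (g s) (hgsum s hs.1)).trans ?_
    gcongr
    exact hgbound s hs.1
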